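/- Let M_κ be a multislice on n ≥ 4 points with κ_i ≥ 2 for all i ∈ [ℓ]. If A ⊆ M_κ is nonempty with vol(A) = α and Φ(A) = 2(1−α)/(n−1), then A is a dictator: there exist a coordinate j ∈ [n] and a set of colours S ⊆ [ℓ] such that A = { u ∈ M_κ : u_j ∈ S }. -/

import Mathlib

open Finset

noncomputable section

/-- The multislice: vectors in `[ℓ]^n` whose colour counts are given by `κ`. -/
def multislice (ℓ n : ℕ) (κ : Fin ℓ → ℕ) : Finset (Fin n → Fin ℓ) :=
  Finset.univ.filter fun u => ∀ i, (Finset.univ.filter fun j => u j = i).card = κ i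

/-- Expectation with respect to the uniform measure on the multislice. -/
def msExp (ℓ n : ℕ) (κ : Fin ℓ → ℕ) (f : (Fin n → Fin ℓ) → ℝ) : ℝ :=
  (∑ u ∈ multislice ℓ n κ, f u) / ((multislice ℓ n κ).card : ℝ)

/-- The indicator variable `x_{ji}`. -/
def xvar (ℓ n : ℕ) (j : Fin n) (i : Fin ℓ) (u : Fin n → Fin ℓ) : ℝ :=
  if u j = i then 1 else 0

/-- A function on the multislice has degree one if it is of the form
`c + ∑_j ∑_i c_{ji} x_{ji}`. -/
def degreeOne (ℓ n : ℕ) (κ : Fin ℓ → ℕ) (f : (Fin n → Fin ℓ) → ℝ) : Prop :=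
  ∃ (c : ℝ) (coef : Fin n → Fin ℓ → ℝ), ∀ u ∈ multislice ℓ n κ,
    f u = c + ∑ j, ∑ i, coef j i * xvar ℓ n j i u

/-- Distance of a real number to the set `{0,1}`. -/
def dist01 (x : ℝ) : ℝ := min |x| |x - 1|

/-- A function is Boolean on the multislice if it takes values in `{0,1}` there. -/
def booleanOn (ℓ n : ℕ) (κ : Fin ℓ → ℕ) (g : (Fin n → Fin ℓ) → ℝ) : Prop :=
  ∀ u ∈ multislice ℓ n κ, g u = 0 ∨ g u = 1

/-- A dictator: a function depending on at most one coordinate. -/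
def dictator (ℓ n : ℕ) (κ : Fin ℓ → ℕ) (g : (Fin n → Fin ℓ) → ℝ) : Prop :=
  ∃ j : Fin n, ∀ u ∈ multislice ℓ n κ, ∀ v ∈ multislice ℓ n κ, u j = v j → g u = g v

/-- The volume `|A|/|M_κ|` of a subset of the multislice. -/
def msVol (ℓ n : ℕ) (κ : Fin ℓ → ℕ) (A : Finset (Fin n → Fin ℓ)) : ℝ :=
  (A.card : ℝ) / ((multislice ℓ n κ).card : ℝ)

/-- The edge expansion `Φ(A)`: the probability that swapping two distinct coordinates (chosen
uniformly at random) of a uniformly random element of `A` gives an element outside `A`. -/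
def msExpansion (ℓ n : ℕ) (A : Finset (Fin n → Fin ℓ)) : ℝ :=
  (∑ u ∈ A, ((Finset.univ.filter fun q : Fin n × Fin n =>
      q.1 ≠ q.2 ∧ (u ∘ Equiv.swap q.1 q.2) ∉ A).card : ℝ)) /
    ((A.card : ℝ) * ((n : ℝ) * ((n : ℝ) - 1)))

/-!
Write `P_T` for the projection onto the vectors fixed by all permutations supported on `T`. The
Poincaré inequality `4 #T ‖x - P_T x‖² ≤ ∑_{j, k ∈ T} ‖x - (j k) x‖²` is proved by averaging the
same inequality over the sets `T \ {m}`, `m ∈ T`. For `x` orthogonal to the fixed vectors, the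
operator `Q = ∑_{m ∈ T} P_{T \ {m}}` satisfies `(#T - 1) Q² x = #T Q x`, and the averaging loses
only a multiple of `‖(#T - 1) Q x - #T x‖²`.

The indicator function of a set with tight expansion attains equality, so it lies in the sum of the
ranges of the `P_{T \ {m}}`: it is a sum `∑ h_m(u_m)` of functions of one coordinate each. If two
disjoint pairs of coordinates both had `h_m` differing by more than a constant, then on a suitable
`u` (each colour occurs at least twice, so the four colours can be prescribed) the two swaps would
lower the sum one after the other, giving three distinct values where only `0` and `1` can occur.
Hence all the `h_m` but one agree up to constants, and their sum is constant on the multislice once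
the remaining coordinate is fixed.
-/

section Poincare

variable {α E : Type*} [NormedAddCommGroup E] [InnerProductSpace ℝ E]
  (ρ : Equiv.Perm α →* (E ≃ₗᵢ[ℝ] E)) {S T : Finset α} {g : Equiv.Perm α} {j k m : α} {w x y : E}

/-- The vectors of an orthogonal representation of the symmetric group that are fixed by every
permutation supported on `T`. -/
def fixedVectors (T : Finset α) : Submodule ℝ E where
  carrier := {x | ∀ g : Equiv.Perm α, (∀ a ∉ T, g a = a) → ρ g x = x}
  add_mem' hx hy g hg := by rw [map_add, hx g hg, hy g hg]
  zero_mem' _ _ := map_zero _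
  smul_mem' c x hx g hg := by rw [map_smul, hx g hg]

variable {ρ}

theorem fixedVectors_anti (h : S ⊆ T) : fixedVectors ρ T ≤ fixedVectors ρ S :=
  fun _ hx g hg ↦ hx g fun a ha ↦ hg a fun haS ↦ ha (h haS)

theorem fixedVectors_eq_top (hT : #T ≤ 1) : fixedVectors ρ T = ⊤ := by
  refine eq_top_iff.2 fun x _ g hg ↦ ?_
  have hone : g = 1 := by
    ext a
    by_cases ha : a ∈ T
    · refine card_le_one.1 hT _ (by_contra fun hga ↦ hga ?_) _ ha
      rwa [g.injective (hg _ hga)]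
    · exact hg a ha
  simp [hone]

theorem map_mem_fixedVectors (hg : ∀ a ∉ S, g a ∉ T) (hx : x ∈ fixedVectors ρ S) :
    ρ g x ∈ fixedVectors ρ T := by
  intro h hh
  have hconj : ρ (g⁻¹ * h * g) x = x := hx _ fun a ha ↦ by
    simp [Equiv.Perm.mul_apply, hh _ (hg a ha)]
  calc ρ h (ρ g x) = ρ (g * (g⁻¹ * h * g)) x := by simp [mul_assoc]
    _ = ρ g x := by rw [map_mul, LinearIsometryEquiv.coe_mul, Function.comp_apply, hconj]

variable [DecidableEq α]

theorem map_swap_eq_self (hj : j ∈ T) (hk : k ∈ T) (hx : x ∈ fixedVectors ρ T) :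
    ρ (Equiv.swap j k) x = x :=
  hx _ fun _ ha ↦ Equiv.swap_apply_of_ne_of_ne (ne_of_mem_of_not_mem hj ha).symm
    (ne_of_mem_of_not_mem hk ha).symm

theorem sum_map_swap_mem_fixedVectors (hk : k ∈ T) (hw : w ∈ fixedVectors ρ (T.erase k)) :
    ∑ m ∈ T, ρ (Equiv.swap m k) w ∈ fixedVectors ρ T := by
  intro g hg
  have hgT (m : α) : g m ∈ T ↔ m ∈ T := by
    refine ⟨fun h ↦ by_contra fun hm ↦ hm (hg m hm ▸ h), fun h ↦ by_contra fun hm ↦ hm ?_⟩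
    rwa [g.injective (hg _ hm)]
  have hcoset : ∀ m ∈ T, ρ g (ρ (Equiv.swap m k) w) = ρ (Equiv.swap (g m) k) w := fun m hm ↦ by
    have hfix : ρ (Equiv.swap (g m) k * g * Equiv.swap m k) w = w := hw _ fun a ha ↦ by
      rcases eq_or_ne a k with rfl | hak
      · simp
      · have haT : a ∉ T := fun h ↦ ha (mem_erase.2 ⟨hak, h⟩)
        have hgm : a ≠ g m := (ne_of_mem_of_not_mem ((hgT m).2 hm) haT).symm
        simp [Equiv.swap_apply_of_ne_of_ne (ne_of_mem_of_not_mem hm haT).symm hak, hg a haT,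
          Equiv.swap_apply_of_ne_of_ne hgm hak]
    calc ρ g (ρ (Equiv.swap m k) w)
        = ρ (Equiv.swap (g m) k * (Equiv.swap (g m) k * g * Equiv.swap m k)) w := by
          simp [← mul_assoc]
      _ = ρ (Equiv.swap (g m) k) w := by
          rw [map_mul, LinearIsometryEquiv.coe_mul, Function.comp_apply, hfix]
  rw [map_sum, sum_congr rfl hcoset]
  exact sum_equiv g (fun m ↦ (hgT m).symm) fun _ _ ↦ rfl

theorem sum_map_swap_eq_zero (hk : k ∈ T) (hw : w ∈ fixedVectors ρ (T.erase k))
    (hw0 : w ∈ (fixedVectors ρ T)ᗮ) : ∑ m ∈ T, ρ (Equiv.swap m k) w = 0 := by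
  refine (fixedVectors ρ T).orthogonal_disjoint.le_bot
    ⟨sum_map_swap_mem_fixedVectors hk hw, sum_mem fun m hm v hv ↦ ?_⟩
  rw [← map_swap_eq_self hm hk hv, LinearIsometryEquiv.inner_map_map]
  exact hw0 v hv

variable (ρ) in
/-- The Dirichlet form of the random transposition walk on `T`, summed over ordered pairs. -/
def transpositionEnergy (T : Finset α) (x : E) : ℝ :=
  ∑ j ∈ T, ∑ k ∈ T, ‖x - ρ (Equiv.swap j k) x‖ ^ 2

theorem transpositionEnergy_nonneg : 0 ≤ transpositionEnergy ρ T x := by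
  unfold transpositionEnergy
  positivity

theorem transpositionEnergy_sub (hy : y ∈ fixedVectors ρ T) :
    transpositionEnergy ρ T (x - y) = transpositionEnergy ρ T x := by
  refine sum_congr rfl fun j hj ↦ sum_congr rfl fun k hk ↦ ?_
  rw [map_sub, map_swap_eq_self hj hk hy, sub_sub_sub_cancel_right]

theorem sum_sum_erase_sum_erase {R : Type*} [CommRing R] (F : α → α → R) (hF : ∀ a, F a a = 0) :
    ∑ m ∈ T, ∑ j ∈ T.erase m, ∑ k ∈ T.erase m, F j k
      = (#T - 2) * ∑ j ∈ T, ∑ k ∈ T, F j k := by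
  have herase : ∀ m ∈ T, ∑ j ∈ T.erase m, ∑ k ∈ T.erase m, F j k
      = ∑ j ∈ T, ∑ k ∈ T, F j k - ∑ j ∈ T, F j m - ∑ k ∈ T, F m k := fun m hm ↦ by
    simp only [sum_erase_eq_sub hm, sum_sub_distrib, hF]
    ring
  rw [sum_congr rfl herase, sum_sub_distrib, sum_sub_distrib, sum_const, nsmul_eq_mul,
    sum_comm (f := fun m j ↦ F j m)]
  ring

theorem sum_transpositionEnergy_erase :
    ∑ m ∈ T, transpositionEnergy ρ (T.erase m) x = (#T - 2) * transpositionEnergy ρ T x :=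
  sum_sum_erase_sum_erase _ fun a ↦ by simp [← Equiv.Perm.one_def]

theorem transpositionEnergy_of_card_eq_two (hT : #T = 2) (hy : y ∈ (fixedVectors ρ T)ᗮ) :
    transpositionEnergy ρ T y = 8 * ‖y‖ ^ 2 := by
  obtain ⟨j, k, hjk, rfl⟩ := card_eq_two.1 hT
  have htop : y ∈ fixedVectors ρ (({j, k} : Finset α).erase k) := by
    rw [fixedVectors_eq_top (by rw [card_erase_of_mem (by simp), hT])]
    trivial
  have hneg : ρ (Equiv.swap j k) y = -y := by
    have hsum := sum_map_swap_eq_zero (by simp) htop hy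
    rw [sum_pair hjk, Equiv.swap_self, ← Equiv.Perm.one_def, map_one] at hsum
    exact eq_neg_of_add_eq_zero_left hsum
  have htwo : ‖y - -y‖ = 2 * ‖y‖ := by
    rw [sub_neg_eq_add, ← two_smul ℝ, norm_smul, Real.norm_two]
  rw [transpositionEnergy, sum_pair hjk, sum_pair hjk, sum_pair hjk, Equiv.swap_comm k j, hneg,
    htwo]
  simp only [Equiv.swap_self, ← Equiv.Perm.one_def, map_one, LinearIsometryEquiv.coe_one, id,
    sub_self, norm_zero]
  ring

theorem norm_sq_sub_starProjection (K : Submodule ℝ E) [K.HasOrthogonalProjection] (x : E) :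
    ‖x - K.starProjection x‖ ^ 2 = ‖x‖ ^ 2 - inner ℝ x (K.starProjection x) := by
  rw [norm_sub_sq_real, ← real_inner_self_eq_norm_sq (K.starProjection x),
    Submodule.inner_starProjection_left_eq_right,
    Submodule.starProjection_eq_self_iff.2 (K.starProjection_apply_mem x)]
  ring

variable [CompleteSpace E]

instance : (fixedVectors ρ T).HasOrthogonalProjection := by
  have hclosed : IsClosed (fixedVectors ρ T : Set E) := by
    change IsClosed {x | ∀ g : Equiv.Perm α, (∀ a ∉ T, g a = a) → ρ g x = x}
    simp only [Set.ofPred_forall]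
    exact isClosed_iInter fun g ↦ isClosed_iInter fun _ ↦
      isClosed_eq (ρ g).continuous continuous_id
  have := hclosed.completeSpace_coe
  infer_instance

theorem starProjection_map_swap (hj : j ∈ T) (hk : k ∈ T) :
    (fixedVectors ρ T).starProjection (ρ (Equiv.swap j k) x)
      = (fixedVectors ρ T).starProjection x := by
  rw [← sub_eq_zero, ← map_sub, Submodule.starProjection_apply_eq_zero_iff]
  intro v hv
  nth_rw 1 [inner_sub_right, ← map_swap_eq_self hj hk hv, LinearIsometryEquiv.inner_map_map,
    sub_self]

theorem card_sub_one_smul_starProjection_erase (hm : m ∈ T) (hk : k ∈ T) (hmk : m ≠ k)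
    (hw : w ∈ fixedVectors ρ (T.erase k)) (hw0 : w ∈ (fixedVectors ρ T)ᗮ) :
    ((#T : ℝ) - 1) • (fixedVectors ρ (T.erase m)).starProjection w
      = -ρ (Equiv.swap m k) w := by
  have hself : ρ (Equiv.swap m k) w ∈ fixedVectors ρ (T.erase m) := by
    refine map_mem_fixedVectors (fun a ha h ↦ ha ?_) hw
    have := Equiv.swap_apply_def m k a
    grind
  have hother : ∀ j ∈ T.erase m, (fixedVectors ρ (T.erase m)).starProjection
      (ρ (Equiv.swap j k) w) = (fixedVectors ρ (T.erase m)).starProjection w := fun j hj ↦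
    starProjection_map_swap hj (mem_erase.2 ⟨hmk.symm, hk⟩)
  have hsum := congrArg (fixedVectors ρ (T.erase m)).starProjection
    (sum_map_swap_eq_zero hk hw hw0)
  rw [map_sum, map_zero, ← add_sum_erase _ _ hm, sum_congr rfl hother, sum_const,
    Submodule.starProjection_eq_self_iff.2 hself, ← Nat.cast_smul_eq_nsmul ℝ,
    cast_card_erase_of_mem hm] at hsum
  exact eq_neg_of_add_eq_zero_right hsum

variable (ρ) in
/-- The sum over `m ∈ T` of the orthogonal projections onto the vectors fixed by the permutations
supported on `T \ {m}`. On `(fixedVectors ρ T)ᗮ` it is a multiple of the projection onto the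
standard isotypic component, which carries the spectral gap. -/
def eraseProjectionSum (T : Finset α) : E →L[ℝ] E :=
  ∑ m ∈ T, (fixedVectors ρ (T.erase m)).starProjection

theorem eraseProjectionSum_apply :
    eraseProjectionSum ρ T x = ∑ m ∈ T, (fixedVectors ρ (T.erase m)).starProjection x :=
  _root_.sum_apply ..

theorem inner_eraseProjectionSum_left :
    inner ℝ (eraseProjectionSum ρ T x) y = inner ℝ x (eraseProjectionSum ρ T y) := by
  simp only [eraseProjectionSum_apply, sum_inner, inner_sum,
    Submodule.inner_starProjection_left_eq_right]

theorem eraseProjectionSum_of_mem (hk : k ∈ T) (hw : w ∈ fixedVectors ρ (T.erase k))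
    (hw0 : w ∈ (fixedVectors ρ T)ᗮ) :
    ((#T : ℝ) - 1) • eraseProjectionSum ρ T w = (#T : ℝ) • w := by
  have hswap : ∑ m ∈ T.erase k, ρ (Equiv.swap m k) w = -w := by
    have hsum := sum_map_swap_eq_zero hk hw hw0
    rw [← add_sum_erase _ _ hk, Equiv.swap_self, ← Equiv.Perm.one_def, map_one,
      LinearIsometryEquiv.coe_one, id] at hsum
    exact eq_neg_of_add_eq_zero_right hsum
  rw [eraseProjectionSum_apply, smul_sum, ← add_sum_erase _ _ hk,
    sum_congr rfl fun m hm ↦ card_sub_one_smul_starProjection_erase (mem_of_mem_erase hm) hk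
      (ne_of_mem_erase hm) hw hw0,
    sum_neg_distrib, hswap, Submodule.starProjection_eq_self_iff.2 hw]
  module

theorem eraseProjectionSum_eraseProjectionSum (hy : y ∈ (fixedVectors ρ T)ᗮ) :
    ((#T : ℝ) - 1) • eraseProjectionSum ρ T (eraseProjectionSum ρ T y)
      = (#T : ℝ) • eraseProjectionSum ρ T y := by
  have hperp (k : α) :
      (fixedVectors ρ (T.erase k)).starProjection y ∈ (fixedVectors ρ T)ᗮ := fun v hv ↦ by
    rw [← Submodule.inner_starProjection_left_eq_right, Submodule.starProjection_eq_self_iff.2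
      (fixedVectors_anti (erase_subset k T) hv)]
    exact hy v hv
  conv_lhs => rw [eraseProjectionSum_apply (x := y), map_sum, smul_sum]
  rw [sum_congr rfl fun k hk ↦ eraseProjectionSum_of_mem hk
    (Submodule.starProjection_apply_mem _ y) (hperp k), ← smul_sum, eraseProjectionSum_apply]

theorem norm_sq_eraseProjectionSum_sub (hy : y ∈ (fixedVectors ρ T)ᗮ) :
    ‖((#T : ℝ) - 1) • eraseProjectionSum ρ T y - (#T : ℝ) • y‖ ^ 2
      = #T * (#T * ‖y‖ ^ 2 - (#T - 1) * inner ℝ y (eraseProjectionSum ρ T y)) := by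
  have hsq : ((#T : ℝ) - 1) * inner ℝ (eraseProjectionSum ρ T y) (eraseProjectionSum ρ T y)
      = #T * inner ℝ y (eraseProjectionSum ρ T y) := by
    rw [inner_eraseProjectionSum_left, ← real_inner_smul_right,
      eraseProjectionSum_eraseProjectionSum hy, real_inner_smul_right]
  rw [← real_inner_self_eq_norm_sq, ← real_inner_self_eq_norm_sq]
  simp only [inner_sub_left, inner_sub_right, real_inner_smul_left, real_inner_smul_right]
  rw [real_inner_comm y (eraseProjectionSum ρ T y)]
  linear_combination ((#T : ℝ) - 1) * hsq

theorem poincare_defect (hy : y ∈ (fixedVectors ρ T)ᗮ)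
    (ih : ∀ m ∈ T, 4 * #(T.erase m) * ‖y - (fixedVectors ρ (T.erase m)).starProjection y‖ ^ 2
      ≤ transpositionEnergy ρ (T.erase m) y) :
    4 * #T ^ 2 * (#T - 2) * ‖y‖ ^ 2
        + 4 * ‖((#T : ℝ) - 1) • eraseProjectionSum ρ T y - (#T : ℝ) • y‖ ^ 2
      ≤ #T * (#T - 2) * transpositionEnergy ρ T y := by
  have hsum : 4 * ((#T : ℝ) - 1) * (#T * ‖y‖ ^ 2 - inner ℝ y (eraseProjectionSum ρ T y))
      ≤ (#T - 2) * transpositionEnergy ρ T y := by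
    rw [← sum_transpositionEnergy_erase]
    refine le_of_eq_of_le ?_ (sum_le_sum ih)
    rw [sum_congr rfl fun m hm ↦ by rw [cast_card_erase_of_mem hm, norm_sq_sub_starProjection],
      ← mul_sum, sum_sub_distrib, sum_const, nsmul_eq_mul, ← inner_sum, eraseProjectionSum_apply]
  rw [norm_sq_eraseProjectionSum_sub hy]
  linarith [mul_le_mul_of_nonneg_left hsum (Nat.cast_nonneg (α := ℝ) #T)]

theorem four_mul_card_mul_norm_sq_le_transpositionEnergy (T : Finset α) (x : E) :
    4 * #T * ‖x - (fixedVectors ρ T).starProjection x‖ ^ 2 ≤ transpositionEnergy ρ T x := by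
  induction T using Finset.strongInduction generalizing x with
  | H T ih =>
    set y := x - (fixedVectors ρ T).starProjection x
    have hy : y ∈ (fixedVectors ρ T)ᗮ := Submodule.sub_starProjection_mem_orthogonal x
    rw [← transpositionEnergy_sub (Submodule.starProjection_apply_mem _ x)]
    change _ ≤ transpositionEnergy ρ T y
    rcases lt_trichotomy #T 2 with hT | hT | hT
    · rw [fixedVectors_eq_top (by omega), Submodule.top_orthogonal_eq_bot,
        Submodule.mem_bot] at hy
      simpa [hy] using transpositionEnergy_nonneg
    · rw [transpositionEnergy_of_card_eq_two hT hy, hT]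
      norm_num
    · have hdefect := poincare_defect hy fun m hm ↦ ih _ (erase_ssubset hm) y
      have hT' : (2 : ℝ) < #T := by exact_mod_cast hT
      have hpos : (0 : ℝ) < #T * (#T - 2) := by nlinarith
      refine le_of_mul_le_mul_left ?_ hpos
      linarith [sq_nonneg ‖((#T : ℝ) - 1) • eraseProjectionSum ρ T y - (#T : ℝ) • y‖]

theorem mem_iSup_fixedVectors_erase (hT : 3 ≤ #T)
    (hx : transpositionEnergy ρ T x
      = 4 * #T * ‖x - (fixedVectors ρ T).starProjection x‖ ^ 2) :
    x ∈ ⨆ m ∈ T, fixedVectors ρ (T.erase m) := by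
  set y := x - (fixedVectors ρ T).starProjection x
  have hdefect := poincare_defect (Submodule.sub_starProjection_mem_orthogonal x)
    fun m _ ↦ four_mul_card_mul_norm_sq_le_transpositionEnergy (T.erase m) y
  rw [transpositionEnergy_sub (Submodule.starProjection_apply_mem _ x), hx] at hdefect
  have heigen : ((#T : ℝ) - 1) • eraseProjectionSum ρ T y = (#T : ℝ) • y := by
    rw [← sub_eq_zero, ← norm_eq_zero, ← sq_eq_zero_iff]
    exact le_antisymm (by linarith) (sq_nonneg _)
  have hle : ∀ m ∈ T, fixedVectors ρ (T.erase m) ≤ ⨆ m ∈ T, fixedVectors ρ (T.erase m) :=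
    fun m hm ↦ le_iSup₂_of_le m hm le_rfl
  have hmem : (#T : ℝ) • y ∈ ⨆ m ∈ T, fixedVectors ρ (T.erase m) := by
    rw [← heigen, eraseProjectionSum_apply]
    exact Submodule.smul_mem _ _ <| sum_mem fun m hm ↦
      hle m hm (Submodule.starProjection_apply_mem _ y)
  obtain ⟨m, hm⟩ : T.Nonempty := card_pos.1 (by omega)
  have hcard : (#T : ℝ) ≠ 0 := Nat.cast_ne_zero.2 (by omega)
  rw [← sub_add_cancel x ((fixedVectors ρ T).starProjection x)]
  exact add_mem ((Submodule.smul_mem_iff _ hcard).1 hmem)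
    (hle m hm (fixedVectors_anti (erase_subset m T) (Submodule.starProjection_apply_mem _ x)))

end Poincare

section Additive

variable {α C : Type*}

/-- Two coordinates are equivalent when their coefficient functions differ by a constant, that is,
when swapping the colours at these two coordinates never changes `∑ m, h m (u m)`. -/
def exchangeable (h : α → C → ℝ) : Setoid α where
  r j k := ∀ a b, h j a - h j b = h k a - h k b
  iseqv := ⟨fun _ _ _ ↦ rfl, fun H a b ↦ (H a b).symm, fun H H' a b ↦ (H a b).trans (H' a b)⟩

theorem exists_lt_of_not_exchangeable {h : α → C → ℝ} {j k : α} (hjk : ¬exchangeable h j k) :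
    ∃ a b, h j b + h k a < h j a + h k b := by
  obtain ⟨a, b, hab⟩ : ∃ a b, h j a - h j b ≠ h k a - h k b := by
    by_contra! hall
    exact hjk hall
  rcases lt_or_gt_of_ne hab with hlt | hlt
  · exact ⟨b, a, by linarith⟩
  · exact ⟨a, b, by linarith⟩

theorem exists_forall_ne_rel [Fintype α] (hα : 4 ≤ Fintype.card α) (s : Setoid α)
    (hs : ∀ j k p q, [j, k, p, q].Nodup → s j k ∨ s p q) :
    ∃ j, ∀ k ≠ j, ∀ m ≠ j, s k m := by
  classical
  by_cases htriv : ∀ r t, s r t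
  · have : Nonempty α := Fintype.card_pos_iff.1 (by omega)
    exact ⟨Classical.arbitrary α, fun k _ m _ ↦ htriv k m⟩
  push Not at htriv
  obtain ⟨r, t, hrt⟩ := htriv
  have hne : r ≠ t := fun h ↦ hrt (h ▸ s.refl r)
  have houter : ∀ k ≠ r, k ≠ t → ∀ m ≠ r, m ≠ t → s k m := fun k hkr hkt m hmr hmt ↦ by
    rcases eq_or_ne k m with rfl | hkm
    · exact s.refl k
    · exact (hs r t k m (by simp; grind)).resolve_left hrt
  have hcompl : 1 < #({r, t}ᶜ : Finset α) := by
    rw [card_compl, card_pair hne]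
    omega
  obtain ⟨p, hp, q, hq, hpq⟩ := one_lt_card.1 hcompl
  simp only [mem_compl, mem_insert, mem_singleton, not_or] at hp hq
  have hall_of {i j : α} (h : s p i) (hij : ∀ k ≠ j, k = i ∨ (k ≠ r ∧ k ≠ t)) :
      ∀ k ≠ j, ∀ m ≠ j, s k m := by
    have hpk : ∀ k ≠ j, s p k := fun k hk ↦ by
      rcases hij k hk with rfl | ⟨hkr, hkt⟩
      · exact h
      · exact houter p hp.1 hp.2 k hkr hkt
    exact fun k hk m hm ↦ s.trans (s.symm (hpk k hk)) (hpk m hm)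
  rcases hs r p t q (by simp; grind) with hrp | htq
  · exact ⟨t, hall_of (s.symm hrp) fun k hk ↦ by grind⟩
  · have hpt : s p t := s.trans (houter p hp.1 hp.2 q hq.1 hq.2) (s.symm htq)
    exact ⟨r, hall_of hpt fun k hk ↦ by grind⟩

theorem sum_sub_sum_comp_swap {M : Type*} [AddCommGroup M] [Fintype α] [DecidableEq α]
    (h : α → C → M) (u : α → C) {j k : α} (hjk : j ≠ k) :
    ∑ m, h m (u m) - ∑ m, h m ((u ∘ Equiv.swap j k) m)
      = h j (u j) + h k (u k) - (h j (u k) + h k (u j)) := by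
  rw [← sum_sub_distrib, ← sum_subset (subset_univ {j, k}), sum_pair hjk]
  · simp only [Function.comp_apply, Equiv.swap_apply_left, Equiv.swap_apply_right]
    abel
  · intro m _ hm
    simp only [mem_insert, mem_singleton, not_or] at hm
    simp [Equiv.swap_apply_of_ne_of_ne hm.1 hm.2]

end Additive

section Multislice

variable {ℓ n : ℕ} {κ : Fin ℓ → ℕ} {u v : Fin n → Fin ℓ}

theorem mem_multislice : u ∈ multislice ℓ n κ ↔ ∀ i, #{j | u j = i} = κ i := by
  simp [multislice]

theorem comp_mem_multislice_iff (σ : Equiv.Perm (Fin n)) :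
    u ∘ σ ∈ multislice ℓ n κ ↔ u ∈ multislice ℓ n κ := by
  have hcard (i : Fin ℓ) : #{j | (u ∘ σ) j = i} = #{j | u j = i} := card_equiv σ (by simp)
  simp only [mem_multislice, hcard]

theorem exists_perm_comp_eq (hu : u ∈ multislice ℓ n κ) (hv : v ∈ multislice ℓ n κ) :
    ∃ σ : Equiv.Perm (Fin n), u ∘ σ = v := by
  have hfiber (i : Fin ℓ) : Nonempty ({j // v j = i} ≃ {j // u j = i}) := by
    rw [← Fintype.card_eq, Fintype.card_subtype, Fintype.card_subtype, mem_multislice.1 hu,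
      mem_multislice.1 hv]
  exact ⟨Equiv.ofFiberEquiv fun i ↦ (hfiber i).some, funext fun j ↦ Equiv.ofFiberEquiv_map _ j⟩

theorem exists_perm_apply_eq_self_comp_eq (hu : u ∈ multislice ℓ n κ)
    (hv : v ∈ multislice ℓ n κ) {m : Fin n} (huv : u m = v m) :
    ∃ σ : Equiv.Perm (Fin n), σ m = m ∧ u ∘ σ = v := by
  obtain ⟨σ, rfl⟩ := exists_perm_comp_eq hu hv
  refine ⟨Equiv.swap m (σ m) * σ, by simp, funext fun a ↦ ?_⟩
  have := Equiv.swap_apply_def m (σ m) (σ a)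
  simp only [Function.comp_apply, Equiv.Perm.mul_apply] at huv ⊢
  grind

theorem exists_mem_multislice_comp_eq {k : ℕ} (hM : (multislice ℓ n κ).Nonempty)
    (e : Fin k ↪ Fin n) (c : Fin k → Fin ℓ) (hc : ∀ i, #{t | c t = i} ≤ κ i) :
    ∃ u ∈ multislice ℓ n κ, u ∘ e = c := by
  obtain ⟨v, hv⟩ := hM
  have hfiber (i : Fin ℓ) : Nonempty ({t // c t = i} ↪ {j // v j = i}) := by
    apply Function.Embedding.nonempty_of_card_le
    rw [Fintype.card_subtype, Fintype.card_subtype, mem_multislice.1 hv]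
    exact hc i
  let place (i : Fin ℓ) := (hfiber i).some
  let d : Fin k ↪ Fin n := (Equiv.sigmaFiberEquiv c).symm.toEmbedding.trans
    ((Function.Embedding.sigmaMap (.refl _) place).trans (Equiv.sigmaFiberEquiv v).toEmbedding)
  have hd (t : Fin k) : v (d t) = c t := (place (c t) ⟨t, rfl⟩).2
  have := Equiv.Perm.isMultiplyPretransitive (Fin n) k
  obtain ⟨σ, hσ⟩ := MulAction.exists_smul_eq (Equiv.Perm (Fin n)) e d
  refine ⟨v ∘ σ, (comp_mem_multislice_iff σ).2 hv, funext fun t ↦ ?_⟩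
  have hσt : σ (e t) = d t := DFunLike.congr_fun hσ t
  simp [hσt, hd]

theorem exists_mem_multislice_of_nodup (hκ : ∀ i, 2 ≤ κ i) (hM : (multislice ℓ n κ).Nonempty)
    {j k p q : Fin n} (hnodup : [j, k, p, q].Nodup) {a b c d : Fin ℓ} (hab : a ≠ b)
    (hcd : c ≠ d) : ∃ u ∈ multislice ℓ n κ, u j = a ∧ u k = b ∧ u p = c ∧ u q = d := by
  have hinj : Function.Injective ![j, k, p, q] := by
    rw [← List.nodup_ofFn]
    simpa using hnodup
  have hfiber (i : Fin ℓ) : #{t | ![a, b, c, d] t = i} ≤ κ i := by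
    refine le_trans ?_ (hκ i)
    simp only [card_filter, Fin.sum_univ_four, Matrix.cons_val]
    grind
  obtain ⟨u, hu, hue⟩ := exists_mem_multislice_comp_eq hM ⟨_, hinj⟩ _ hfiber
  exact ⟨u, hu, congrFun hue 0, congrFun hue 1, congrFun hue 2, congrFun hue 3⟩

variable {f : (Fin n → Fin ℓ) → ℝ} {c : ℝ} {h : Fin n → Fin ℓ → ℝ}

theorem degreeOne_iff_exists_sum : degreeOne ℓ n κ f ↔
    ∃ (c : ℝ) (h : Fin n → Fin ℓ → ℝ), ∀ u ∈ multislice ℓ n κ, f u = c + ∑ m, h m (u m) := by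
  simp [degreeOne, xvar]

theorem exchangeable_or_of_booleanOn (hκ : ∀ i, 2 ≤ κ i) (hM : (multislice ℓ n κ).Nonempty)
    (hf : booleanOn ℓ n κ f) (hfh : ∀ u ∈ multislice ℓ n κ, f u = c + ∑ m, h m (u m))
    {j k p q : Fin n} (hnodup : [j, k, p, q].Nodup) :
    exchangeable h j k ∨ exchangeable h p q := by
  by_contra! ⟨hjk, hpq⟩
  obtain ⟨a, b, hab⟩ := exists_lt_of_not_exchangeable hjk
  obtain ⟨a', b', hab'⟩ := exists_lt_of_not_exchangeable hpq
  obtain ⟨u, hu, rfl, rfl, rfl, rfl⟩ := exists_mem_multislice_of_nodup hκ hM hnodup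
    (a := a) (b := b) (c := a') (d := b')
    (by rintro rfl; exact hab.ne rfl) (by rintro rfl; exact hab'.ne rfl)
  have hu₁ := (comp_mem_multislice_iff (Equiv.swap j k)).2 hu
  have hu₂ := (comp_mem_multislice_iff (Equiv.swap p q)).2 hu₁
  simp only [List.nodup_cons, List.mem_cons, List.not_mem_nil, or_false, not_or] at hnodup
  have hlt₁ : f (u ∘ Equiv.swap j k) < f u := by
    rw [hfh _ hu, hfh _ hu₁]
    linarith [sum_sub_sum_comp_swap h u hnodup.1.1]
  have hlt₂ : f ((u ∘ Equiv.swap j k) ∘ Equiv.swap p q) < f (u ∘ Equiv.swap j k) := by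
    have hdiff := sum_sub_sum_comp_swap h (u ∘ Equiv.swap j k) hnodup.2.2.1
    have hp : (u ∘ Equiv.swap j k) p = u p :=
      congrArg u (Equiv.swap_apply_of_ne_of_ne (by grind) (by grind))
    have hq : (u ∘ Equiv.swap j k) q = u q :=
      congrArg u (Equiv.swap_apply_of_ne_of_ne (by grind) (by grind))
    rw [hp, hq] at hdiff
    rw [hfh _ hu₁, hfh _ hu₂]
    linarith
  rcases hf _ hu with h₀ | h₀ <;> rcases hf _ hu₁ with h₁ | h₁ <;>
    rcases hf _ hu₂ with h₂ | h₂ <;> linarith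

theorem dictator_of_forall_ne_exchangeable
    (hfh : ∀ u ∈ multislice ℓ n κ, f u = c + ∑ m, h m (u m)) {j : Fin n}
    (hj : ∀ k ≠ j, ∀ m ≠ j, exchangeable h k m) : dictator ℓ n κ f := by
  refine ⟨j, fun u hu v hv huv ↦ ?_⟩
  obtain ⟨g, hg⟩ : ∃ g : Fin ℓ → ℝ, ∀ m ≠ j, ∀ a b, h m a - h m b = g a - g b := by
    by_cases hk : ∃ k, k ≠ j
    · obtain ⟨k, hk⟩ := hk
      exact ⟨h k, fun m hm ↦ hj m hm k hk⟩
    · push Not at hk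
      exact ⟨0, fun m hm ↦ absurd (hk m) hm⟩
  have hsum : ∑ m, (h m (u m) - h m (v m)) = ∑ m, (g (u m) - g (v m)) :=
    sum_congr rfl fun m _ ↦ by
      rcases eq_or_ne m j with rfl | hm
      · simp [huv]
      · exact hg m hm _ _
  obtain ⟨σ, rfl⟩ := exists_perm_comp_eq hu hv
  have hperm : ∑ m, g ((u ∘ σ) m) = ∑ m, g (u m) := Equiv.sum_comp σ fun m ↦ g (u m)
  rw [sum_sub_distrib, sum_sub_distrib, hperm, sub_self, sub_eq_zero] at hsum
  rw [hfh _ hu, hfh _ hv, hsum]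

theorem dictator_of_degreeOne_of_booleanOn (hn : 4 ≤ n) (hκ : ∀ i, 2 ≤ κ i)
    (hdeg : degreeOne ℓ n κ f) (hf : booleanOn ℓ n κ f) : dictator ℓ n κ f := by
  obtain ⟨c, h, hfh⟩ := degreeOne_iff_exists_sum.1 hdeg
  rcases (multislice ℓ n κ).eq_empty_or_nonempty with hM | hM
  · exact ⟨⟨0, by omega⟩, by simp [hM]⟩
  · obtain ⟨j, hj⟩ := exists_forall_ne_rel (by simpa using hn) (exchangeable h)
      fun _ _ _ _ hnodup ↦ exchangeable_or_of_booleanOn hκ hM hf hfh hnodup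
    exact dictator_of_forall_ne_exchangeable hfh hj

end Multislice

section Permutation

variable {α C : Type*} [Fintype α] [DecidableEq α] [Fintype C]

variable (α C) in
/-- The representation of the symmetric group on functions of `u : α → C` by permuting the
coordinates of `u`, that is, `permRep α C g f u = f (u ∘ g)`. -/
def permRep : Equiv.Perm α →* (EuclideanSpace ℝ (α → C) ≃ₗᵢ[ℝ] EuclideanSpace ℝ (α → C)) where
  toFun g := LinearIsometryEquiv.piLpCongrLeft 2 ℝ ℝ (Equiv.arrowCongr g (Equiv.refl C))
  map_one' := rfl
  map_mul' _ _ := by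
    ext
    simp [Equiv.arrowCongr, Function.comp_assoc]

theorem permRep_apply (g : Equiv.Perm α) (f : EuclideanSpace ℝ (α → C)) (u : α → C) :
    permRep α C g f u = f (u ∘ g) := by
  simp [permRep, Equiv.arrowCongr]

variable {ι : Type*} [DecidableEq ι] {A B : Finset ι}

/-- The indicator function of a finite set, as a vector of the Euclidean space of functions. -/
def indicatorVec (A : Finset ι) : EuclideanSpace ℝ ι :=
  WithLp.toLp 2 fun u ↦ if u ∈ A then 1 else 0

theorem indicatorVec_apply (A : Finset ι) (u : ι) :
    indicatorVec A u = if u ∈ A then 1 else 0 :=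
  rfl

theorem inner_indicatorVec_left [Fintype ι] (A : Finset ι) (f : EuclideanSpace ℝ ι) :
    inner ℝ (indicatorVec A) f = ∑ u ∈ A, f u := by
  simp [PiLp.inner_apply, indicatorVec_apply]

theorem inner_indicatorVec_of_subset [Fintype ι] (h : A ⊆ B) :
    inner ℝ (indicatorVec A) (indicatorVec B) = (#A : ℝ) := by
  rw [inner_indicatorVec_left, sum_congr rfl fun u hu ↦ by
    rw [indicatorVec_apply, if_pos (h hu)], sum_const, nsmul_one]

theorem norm_sq_indicatorVec [Fintype ι] (A : Finset ι) :
    ‖indicatorVec A‖ ^ 2 = (#A : ℝ) := by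
  rw [← real_inner_self_eq_norm_sq, inner_indicatorVec_of_subset Subset.rfl]

theorem norm_sq_indicatorVec_sub_permRep [DecidableEq C] (A : Finset (α → C))
    (g : Equiv.Perm α) :
    ‖indicatorVec A - permRep α C g (indicatorVec A)‖ ^ 2 = 2 * (#{u ∈ A | u ∘ g ∉ A} : ℝ) := by
  have hinner : inner ℝ (indicatorVec A) (permRep α C g (indicatorVec A))
      = (#{u ∈ A | u ∘ g ∈ A} : ℝ) := by
    simp only [inner_indicatorVec_left, permRep_apply, indicatorVec_apply, natCast_card_filter]
  have hcard : (#{u ∈ A | u ∘ g ∈ A} + #{u ∈ A | u ∘ g ∉ A} : ℝ) = #A :=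
    mod_cast card_filter_add_card_filter_not (s := A) (fun u ↦ u ∘ g ∈ A)
  rw [norm_sub_sq_real, LinearIsometryEquiv.norm_map, norm_sq_indicatorVec, hinner]
  linarith

end Permutation

section Isoperimetry

variable {ℓ n : ℕ} {κ : Fin ℓ → ℕ} {A : Finset (Fin n → Fin ℓ)} {u v : Fin n → Fin ℓ}
  {f : EuclideanSpace ℝ (Fin n → Fin ℓ)}

theorem apply_eq_of_mem_fixedVectors_univ (hf : f ∈ fixedVectors (permRep (Fin n) (Fin ℓ)) univ)
    (hu : u ∈ multislice ℓ n κ) (hv : v ∈ multislice ℓ n κ) : f u = f v := by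
  obtain ⟨σ, rfl⟩ := exists_perm_comp_eq hu hv
  rw [← permRep_apply, hf σ (by simp)]

theorem apply_eq_of_mem_fixedVectors_erase {m : Fin n}
    (hf : f ∈ fixedVectors (permRep (Fin n) (Fin ℓ)) (univ.erase m))
    (hu : u ∈ multislice ℓ n κ) (hv : v ∈ multislice ℓ n κ) (huv : u m = v m) : f u = f v := by
  obtain ⟨σ, hσ, rfl⟩ := exists_perm_apply_eq_self_comp_eq hu hv huv
  rw [← permRep_apply, hf σ (by simp [hσ])]

theorem transpositionEnergy_indicatorVec (hn : 2 ≤ n) (hne : A.Nonempty) :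
    transpositionEnergy (permRep (Fin n) (Fin ℓ)) univ (indicatorVec A)
      = 2 * (#A * (n * (n - 1))) * msExpansion ℓ n A := by
  have hboundary : ∑ u ∈ A, (#{q : Fin n × Fin n | q.1 ≠ q.2 ∧ u ∘ Equiv.swap q.1 q.2 ∉ A} : ℝ)
      = ∑ j, ∑ k, (#{u ∈ A | u ∘ Equiv.swap j k ∉ A} : ℝ) := by
    simp only [natCast_card_filter, ← Fintype.sum_prod_type']
    rw [sum_comm]
    refine sum_congr rfl fun q _ ↦ sum_congr rfl fun u hu ↦ ?_
    rcases eq_or_ne q.1 q.2 with hq | hq <;> simp [hq, hu]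
  have hA : (#A : ℝ) ≠ 0 := Nat.cast_ne_zero.2 hne.card_ne_zero
  have hn' : (2 : ℝ) ≤ n := mod_cast hn
  have hpairs : (n : ℝ) * (n - 1) ≠ 0 := by nlinarith
  rw [transpositionEnergy, msExpansion, mul_assoc, mul_div_cancel₀ _ (mul_ne_zero hA hpairs),
    hboundary]
  simp only [norm_sq_indicatorVec_sub_permRep, mul_sum]

theorem starProjection_indicatorVec (hA : A ⊆ multislice ℓ n κ) :
    (fixedVectors (permRep (Fin n) (Fin ℓ)) univ).starProjection (indicatorVec A)
      = msVol ℓ n κ A • indicatorVec (multislice ℓ n κ) := by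
  refine Submodule.eq_starProjection_of_mem_of_inner_eq_zero ?_ fun f hf ↦ ?_
  · refine Submodule.smul_mem _ _ fun g _ ↦ PiLp.ext fun u ↦ ?_
    simp only [permRep_apply, indicatorVec_apply, comp_mem_multislice_iff]
  · rcases A.eq_empty_or_nonempty with rfl | ⟨u, hu⟩
    · simp [msVol, inner_indicatorVec_left]
    have hconst : ∀ v ∈ multislice ℓ n κ, f v = f u := fun v hv ↦
      apply_eq_of_mem_fixedVectors_univ hf hv (hA hu)
    have hM : (#(multislice ℓ n κ) : ℝ) ≠ 0 := Nat.cast_ne_zero.2 (card_ne_zero_of_mem (hA hu))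
    rw [inner_sub_left, real_inner_smul_left, inner_indicatorVec_left, inner_indicatorVec_left,
      sum_congr rfl hconst, sum_congr rfl fun v hv ↦ hconst v (hA hv), sum_const, sum_const,
      nsmul_eq_mul, nsmul_eq_mul, msVol, ← mul_assoc, div_mul_cancel₀ _ hM, sub_self]

theorem norm_sq_indicatorVec_sub_starProjection (hA : A ⊆ multislice ℓ n κ) :
    ‖indicatorVec A - (fixedVectors (permRep (Fin n) (Fin ℓ)) univ).starProjection
      (indicatorVec A)‖ ^ 2 = #A * (1 - msVol ℓ n κ A) := by
  rw [norm_sq_sub_starProjection, starProjection_indicatorVec hA, real_inner_smul_right,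
    norm_sq_indicatorVec, inner_indicatorVec_of_subset hA]
  ring

theorem transpositionEnergy_indicatorVec_of_tight (hn : 2 ≤ n) (hA : A ⊆ multislice ℓ n κ)
    (hne : A.Nonempty) (heq : msExpansion ℓ n A = 2 * (1 - msVol ℓ n κ A) / (n - 1)) :
    transpositionEnergy (permRep (Fin n) (Fin ℓ)) univ (indicatorVec A)
      = 4 * #(univ : Finset (Fin n)) * ‖indicatorVec A
        - (fixedVectors (permRep (Fin n) (Fin ℓ)) univ).starProjection (indicatorVec A)‖ ^ 2 := by
  have hn' : (2 : ℝ) ≤ n := mod_cast hn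
  have hsub : (n : ℝ) - 1 ≠ 0 := by linarith
  rw [transpositionEnergy_indicatorVec hn hne, norm_sq_indicatorVec_sub_starProjection hA, heq,
    card_fin]
  field_simp
  ring

theorem degreeOne_of_mem_iSup_fixedVectors_erase
    (hf : f ∈ ⨆ m ∈ univ, fixedVectors (permRep (Fin n) (Fin ℓ)) (univ.erase m)) :
    degreeOne ℓ n κ f := by
  obtain ⟨μ, rfl⟩ := (Submodule.mem_iSup_finset_iff_exists_sum _ _).1 hf
  have hcoord (m : Fin n) : ∃ h : Fin ℓ → ℝ, ∀ u ∈ multislice ℓ n κ,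
      (μ m : EuclideanSpace ℝ (Fin n → Fin ℓ)) u = h (u m) := by
    have hfactors : Function.FactorsThrough
        (fun u : multislice ℓ n κ ↦ (μ m : EuclideanSpace ℝ (Fin n → Fin ℓ)) u)
        (fun u ↦ u.1 m) := fun u v huv ↦
      apply_eq_of_mem_fixedVectors_erase (μ m).2 u.2 v.2 huv
    exact ⟨_, fun u hu ↦ (hfactors.extend_apply 0 ⟨u, hu⟩).symm⟩
  choose h hh using hcoord
  refine degreeOne_iff_exists_sum.2 ⟨0, h, fun u hu ↦ ?_⟩
  simp only [WithLp.ofLp_sum, Finset.sum_apply, hh _ u hu, zero_add]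

theorem booleanOn_indicatorVec : booleanOn ℓ n κ (indicatorVec A) := fun u _ ↦ by
  rw [indicatorVec_apply]
  exact (ite_eq_or_eq (u ∈ A) 1 0).symm

theorem exists_eq_filter_of_dictator (hA : A ⊆ multislice ℓ n κ)
    (h : dictator ℓ n κ (indicatorVec A)) :
    ∃ (j : Fin n) (S : Finset (Fin ℓ)), A = {u ∈ multislice ℓ n κ | u j ∈ S} := by
  obtain ⟨j, hj⟩ := h
  refine ⟨j, A.image (· j), ext fun u ↦ ?_⟩
  simp only [mem_filter, mem_image]
  refine ⟨fun hu ↦ ⟨hA hu, u, hu, rfl⟩, fun ⟨hu, v, hv, hvu⟩ ↦ by_contra fun huA ↦ ?_⟩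
  have := hj v (hA hv) u hu hvu
  simp [indicatorVec_apply, hv, huA] at this

end Isoperimetry

/-- If the edge-isoperimetric inequality is tight for `A` (and all `κ_i ≥ 2`), then `A` is a
dictator: membership depends only on the colour of a single coordinate. -/
theorem multislice_isoperimetry_equality (ℓ n : ℕ) (hℓ : 2 ≤ ℓ) (hn : 4 ≤ n)
    (κ : Fin ℓ → ℕ) (hκ : ∀ i, 2 ≤ κ i) (hsum : ∑ i, κ i = n)
    (A : Finset (Fin n → Fin ℓ)) (hA : A ⊆ multislice ℓ n κ) (hne : A.Nonempty)
    (α : ℝ) (hα : msVol ℓ n κ A = α)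
    (heq : msExpansion ℓ n A = 2 * (1 - α) / ((n : ℝ) - 1)) :
    ∃ (j : Fin n) (S : Finset (Fin ℓ)),
      A = (multislice ℓ n κ).filter fun u => u j ∈ S := by
  subst hα
  have htight := transpositionEnergy_indicatorVec_of_tight (by omega) hA hne heq
  have hspan := mem_iSup_fixedVectors_erase (by rw [card_fin]; omega) htight
  have hdegree : degreeOne ℓ n κ (indicatorVec A) :=
    degreeOne_of_mem_iSup_fixedVectors_erase hspan
  exact exists_eq_filter_of_dictator hA
    (dictator_of_degreeOne_of_booleanOn hn hκ hdegree booleanOn_indicatorVec)
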